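/- arXiv:1404.6155 — 2 statements merged into one kernel-verified Lean document; each statement's English description precedes it below -/
import Mathlib

section
/- Let T : G₁ → G₂ be a surjective group homomorphism between commutative lattice-ordered groups that is a lattice homomorphism (T(x ⊔ y) = T(x) ⊔ T(y) for all x, y). Then the following are equivalent: (i) for every sequence (xₙ) in G₁ with xₙ ↓ 0 (i.e., (xₙ) is decreasing and its infimum is 0), one has T(xₙ) ↓ 0 in G₂; (ii) the kernel Ker(T) is σ-order closed, i.e., whenever (xₙ) is a sequence in Ker(T), x ∈ G₁, and 0 ≤ xₙ ↑ x (the sequence is increasing with supremum x), then x ∈ Ker(T). -/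
/-!
Subtraction from a fixed element exchanges suprema and infima. If `xₙ ↑ z` in the kernel of `T`,
then `z - xₙ ↓ 0`, while `T (z - xₙ) = T z` for all `n`. Conversely, let `xₙ ↓ 0` and let
`T y` be a lower bound of `T xₙ`. Put `w = y ⊔ 0`. Then `0 ≤ (w - xₙ) ⊔ 0 ↑ w`, and this
sequence lies in the kernel of `T`, since `(w - xₙ) ⊔ 0 = (w ⊔ xₙ) - xₙ` and `T w ≤ T xₙ`.
Closedness gives `T w = 0`, hence `T y ≤ 0`.
-/

open Set

/-- Order continuity at `0` of a map `T`: it sends `xᵢ ↓ 0` to `T xᵢ ↓ 0`. The index type `ι` is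
fixed, and `ι = ℕ` gives σ-order continuity. -/
def IsOrderContinuousAtZero {G₁ G₂ : Type*} [Preorder G₁] [Zero G₁] [Preorder G₂] [Zero G₂]
    (ι : Type*) [Preorder ι] (T : G₁ → G₂) : Prop :=
  ∀ x : ι → G₁, Antitone x → IsGLB (range x) 0 →
    Antitone (fun i => T (x i)) ∧ IsGLB (range fun i => T (x i)) 0

/-- Order closedness of a set `s`: it contains `z` whenever `0 ≤ xᵢ ↑ z` with all `xᵢ` in `s`.
The index type `ι` is fixed, and `ι = ℕ` gives σ-order closedness. -/
def IsOrderClosed {G : Type*} [Preorder G] [Zero G] (ι : Type*) [Preorder ι] (s : Set G) : Prop :=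
  ∀ (x : ι → G) (z : G), (∀ i, x i ∈ s) → Monotone x → (∀ i, 0 ≤ x i) → IsLUB (range x) z → z ∈ s

section Bounds

variable {ι G : Type*}

theorem isLUB_range_sup_const [SemilatticeSup G] {x : ι → G} {a c : G}
    (hx : IsLUB (range x) a) (hc : c ≤ a) : IsLUB (range fun i => x i ⊔ c) a := by
  refine ⟨?_, fun b hb => hx.2 ?_⟩
  · rintro _ ⟨i, rfl⟩
    exact sup_le (hx.1 (mem_range_self i)) hc
  · rintro _ ⟨i, rfl⟩
    exact le_sup_left.trans (hb (mem_range_self i))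

variable [AddGroup G] [Preorder G] [AddLeftMono G] [AddRightMono G]

theorem isGLB_range_const_sub {x : ι → G} {a w : G} :
    IsGLB (range fun i => w - x i) (w - a) ↔ IsLUB (range x) a := by
  rw [range_comp' (w - ·) x]
  exact (OrderIso.subLeft w).isLUB_image'

theorem isLUB_range_const_sub {x : ι → G} {a w : G} :
    IsLUB (range fun i => w - x i) (w - a) ↔ IsGLB (range x) a := by
  rw [range_comp' (w - ·) x]
  exact (OrderIso.subLeft w).isGLB_image'

end Bounds

theorem isLUB_range_const_sub_sup_zero {ι G : Type*} [AddGroup G] [SemilatticeSup G]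
    [AddLeftMono G] [AddRightMono G] {x : ι → G} {w : G}
    (hx : IsGLB (range x) 0) (hw : 0 ≤ w) : IsLUB (range fun i => (w - x i) ⊔ 0) w := by
  refine isLUB_range_sup_const ?_ hw
  simpa only [sub_zero] using isLUB_range_const_sub (w := w).mpr hx

theorem monotone_of_map_sup {α β : Type*} [SemilatticeSup α] [SemilatticeSup β] {f : α → β}
    (hsup : ∀ x y, f (x ⊔ y) = f x ⊔ f y) : Monotone f :=
  OrderHomClass.mono (⟨f, hsup⟩ : SupHom α β)

section Hom

variable {G₁ G₂ : Type*} [AddGroup G₁] [AddGroup G₂] {T : G₁ →+ G₂}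

theorem IsOrderContinuousAtZero.isOrderClosed_ker {ι : Type*} [Preorder ι] [Nonempty ι]
    [Preorder G₁] [AddLeftMono G₁] [AddRightMono G₁] [PartialOrder G₂]
    (hT : IsOrderContinuousAtZero ι T) : IsOrderClosed ι (T.ker : Set G₁) := by
  intro x z hker hmono _ hz
  have hglb : IsGLB (range fun i => z - x i) 0 := by
    simpa only [sub_self] using isGLB_range_const_sub (w := z).mpr hz
  have hanti : Antitone fun i => z - x i := fun _ _ hij => sub_le_sub_left (hmono hij) z
  have hconst : (fun i => T (z - x i)) = fun _ => T z := by
    funext i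
    rw [map_sub, AddMonoidHom.mem_ker.mp (hker i), sub_zero]
  have himage : IsGLB (range fun i => T (z - x i)) 0 := (hT _ hanti hglb).2
  rw [hconst, range_const] at himage
  exact isGLB_singleton.unique himage

variable [Lattice G₁] [SemilatticeSup G₂]

theorem sub_sup_zero_mem_ker [AddRightMono G₁] (hsup : ∀ x y, T (x ⊔ y) = T x ⊔ T y) {w x : G₁}
    (h : T w ≤ T x) : (w - x) ⊔ 0 ∈ T.ker := by
  have hsub : (w - x) ⊔ 0 = (w ⊔ x) - x := by rw [sup_sub, sub_self]
  rw [AddMonoidHom.mem_ker, hsub, map_sub, hsup, sup_eq_right.mpr h, sub_self]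

variable {ι : Type*} [Preorder ι] [AddLeftMono G₁] [AddRightMono G₁]

theorem map_sup_zero_eq_zero_of_mem_lowerBounds (hsup : ∀ x y, T (x ⊔ y) = T x ⊔ T y)
    (hker : IsOrderClosed ι (T.ker : Set G₁)) {x : ι → G₁} (hanti : Antitone x)
    (hglb : IsGLB (range x) 0) {y : G₁} (hy : T y ∈ lowerBounds (range fun i => T (x i))) :
    T (y ⊔ 0) = 0 := by
  have hle (i : ι) : T (y ⊔ 0) ≤ T (x i) := by
    rw [hsup]
    exact sup_le (hy (mem_range_self i))
      (monotone_of_map_sup hsup (hglb.1 (mem_range_self i)))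
  exact hker (fun i => ((y ⊔ 0) - x i) ⊔ 0) (y ⊔ 0) (fun i => sub_sup_zero_mem_ker hsup (hle i))
    (fun _ _ hij => sup_le_sup_right (sub_le_sub_left (hanti hij) _) 0) (fun _ => le_sup_right)
    (isLUB_range_const_sub_sup_zero hglb le_sup_right)

theorem isOrderContinuousAtZero_of_isOrderClosed_ker (hsurj : Function.Surjective T)
    (hsup : ∀ x y, T (x ⊔ y) = T x ⊔ T y) (hker : IsOrderClosed ι (T.ker : Set G₁)) :
    IsOrderContinuousAtZero ι T := by
  intro x hanti hglb
  have hmono : Monotone T := monotone_of_map_sup hsup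
  refine ⟨hmono.comp_antitone hanti, ?_, ?_⟩
  · rintro _ ⟨i, rfl⟩
    simpa only [map_zero] using hmono (hglb.1 (mem_range_self i))
  · intro b hb
    obtain ⟨y, rfl⟩ := hsurj b
    calc
      T y ≤ T (y ⊔ 0) := hmono le_sup_left
      _ = 0 := map_sup_zero_eq_zero_of_mem_lowerBounds hsup hker hanti hglb hb

end Hom

theorem stmt11_general {ι G₁ G₂ : Type*} [Preorder ι] [Nonempty ι]
    [AddGroup G₁] [Lattice G₁] [AddLeftMono G₁] [AddRightMono G₁]
    [AddGroup G₂] [SemilatticeSup G₂]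
    (T : G₁ →+ G₂) (hsurj : Function.Surjective T) (hsup : ∀ x y : G₁, T (x ⊔ y) = T x ⊔ T y) :
    IsOrderContinuousAtZero ι T ↔ IsOrderClosed ι (T.ker : Set G₁) :=
  ⟨fun hT => hT.isOrderClosed_ker, isOrderContinuousAtZero_of_isOrderClosed_ker hsurj hsup⟩

/-- a surjective lattice homomorphism is σ-order-continuous (maps sequences
decreasing to zero to sequences decreasing to zero) iff its kernel is σ-order closed. -/
theorem stmt11 {G₁ G₂ : Type*}
    [AddCommGroup G₁] [Lattice G₁] [CovariantClass G₁ G₁ (· + ·) (· ≤ ·)]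
    [AddCommGroup G₂] [Lattice G₂] [CovariantClass G₂ G₂ (· + ·) (· ≤ ·)]
    (T : G₁ →+ G₂) (hsurj : Function.Surjective T)
    (hlat : ∀ x y : G₁, T (x ⊔ y) = T x ⊔ T y) :
    (∀ x : ℕ → G₁, Antitone x → IsGLB (Set.range x) 0 →
        Antitone (fun n => T (x n)) ∧ IsGLB (Set.range fun n => T (x n)) 0) ↔
      (∀ (x : ℕ → G₁) (z : G₁), (∀ n, T (x n) = 0) → Monotone x → (∀ n, 0 ≤ x n) →
        IsLUB (Set.range x) z → T z = 0) :=
  stmt11_general T hsurj hlat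
end

section
/- Let A be an ideal of a commutative lattice-ordered group G, let G/A denote the quotient group, π : G → G/A the natural projection, and order G/A by: π(x) ≤ π(y) if and only if there exist a, b ∈ G with a − x ∈ A, b − y ∈ A and a ≤ b. Then: (1) if π(x) has a representative a with a ≥ 0 and also a representative −b with b ≥ 0, then x ∈ A (the induced positive cone is pointed); (2) for every x ∈ G, π(x⁺) is the least upper bound of {π(0), π(x)} with respect to this relation, i.e., π(0) ≤ π(x⁺), π(x) ≤ π(x⁺), and for every y ∈ G with π(0) ≤ π(y) and π(x) ≤ π(y) one has π(x⁺) ≤ π(y). -/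
/-- A subset of a lattice-ordered group is solid if `|x| ≤ |y|` and `y ∈ S` imply `x ∈ S`,
where `|x| = x ⊔ (-x)`. -/
def IsSolid {G : Type*} [AddCommGroup G] [Lattice G] (S : Set G) : Prop :=
  ∀ ⦃x y : G⦄, x ⊔ -x ≤ y ⊔ -y → y ∈ S → x ∈ S

/-- The order relation induced on the quotient of a lattice-ordered group `G` by a
subgroup `A`, expressed on representatives: `π u ≤ π v` iff there are representatives
`a` of `π u` and `b` of `π v` with `a ≤ b`. -/
def QLe {G : Type*} [AddCommGroup G] [Lattice G] (A : AddSubgroup G) (u v : G) : Prop :=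
  ∃ a b : G, a - u ∈ A ∧ b - v ∈ A ∧ a ≤ b

/-! A solid subgroup is both order-convex and directed. Convexity gives pointedness, because
`-b - x ≤ -x ≤ a - x` traps `-x` between two elements of `A`. Directedness gives the least upper
bound: `π u ≤ π v` means `u ≤ v + c` for some error term `c ∈ A`, and the error terms of two such
inequalities can be replaced by a common one. -/

theorem mem_of_nonneg_of_nonpos_of_sub_mem {G : Type*} [AddGroup G] [Preorder G] [AddRightMono G]
    {A : AddSubgroup G} (hA : (A : Set G).OrdConnected) {x a b : G} (ha : 0 ≤ a) (hb : b ≤ 0)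
    (hax : a - x ∈ A) (hbx : b - x ∈ A) : x ∈ A := by
  have lower : b - x ≤ -x := by simpa only [zero_sub] using sub_le_sub_right hb x
  have upper : -x ≤ a - x := by simpa only [zero_sub] using sub_le_sub_right ha x
  exact neg_mem_iff.1 (hA.out hbx hax ⟨lower, upper⟩)

section LatticeOrderedGroup

variable {G : Type*} [AddCommGroup G] [Lattice G] {A : AddSubgroup G} {u v y : G}

theorem QLe.of_le (h : u ≤ v) : QLe A u v :=
  ⟨u, v, by simp, by simp, h⟩

variable [AddLeftMono G]

theorem IsSolid.abs_mem {S : Set G} (hS : IsSolid S) {x : G} (hx : x ∈ S) : |x| ∈ S :=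
  hS (abs_abs x).le hx

theorem IsSolid.ordConnected (hA : IsSolid (A : Set G)) : (A : Set G).OrdConnected := by
  refine ⟨fun a ha b hb z ⟨haz, hzb⟩ => ?_⟩
  have habs : |z - a| ≤ |b - a| := by
    rw [abs_of_nonneg (sub_nonneg.2 haz), abs_of_nonneg (sub_nonneg.2 (haz.trans hzb))]
    exact sub_le_sub_right hzb a
  have hza : z - a ∈ A := hA habs (A.sub_mem hb ha)
  exact (sub_add_cancel z a) ▸ A.add_mem hza ha

theorem IsSolid.directedOn (hA : IsSolid (A : Set G)) : DirectedOn (· ≤ ·) (A : Set G) :=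
  fun c hc d hd => ⟨|c| + |d|, A.add_mem (hA.abs_mem hc) (hA.abs_mem hd),
    (le_abs_self c).trans (le_add_of_nonneg_right (abs_nonneg d)),
    (le_abs_self d).trans (le_add_of_nonneg_left (abs_nonneg c))⟩

theorem qLe_iff_exists_le_add : QLe A u v ↔ ∃ c ∈ A, u ≤ v + c := by
  constructor
  · rintro ⟨a, b, ha, hb, hab⟩
    refine ⟨(b - v) - (a - u), A.sub_mem hb ha, ?_⟩
    calc
      u ≤ u + (b - a) := le_add_of_nonneg_right (sub_nonneg.2 hab)
      _ = v + ((b - v) - (a - u)) := by abel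
  · rintro ⟨c, hc, huv⟩
    exact ⟨u, v + c, by simp, by simpa only [add_sub_cancel_left] using hc, huv⟩

theorem QLe.sup (hA : DirectedOn (· ≤ ·) (A : Set G)) (hu : QLe A u y) (hv : QLe A v y) :
    QLe A (u ⊔ v) y := by
  obtain ⟨c, hc, huc⟩ := qLe_iff_exists_le_add.1 hu
  obtain ⟨d, hd, hvd⟩ := qLe_iff_exists_le_add.1 hv
  obtain ⟨e, he, hce, hde⟩ := hA c hc d hd
  exact qLe_iff_exists_le_add.2 ⟨e, he,
    sup_le (huc.trans (add_le_add_right hce y)) (hvd.trans (add_le_add_right hde y))⟩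

end LatticeOrderedGroup

/-- for an ideal `A` of a commutative lattice-ordered group `G`, the induced
positive cone on `G/A` is pointed, and `π(x⁺)` is the least upper bound of `{π 0, π x}`
with respect to the induced order. -/
theorem stmt12 {G : Type*} [AddCommGroup G] [Lattice G]
    [CovariantClass G G (· + ·) (· ≤ ·)]
    (A : AddSubgroup G) (hA : IsSolid (A : Set G)) :
    (∀ x a b : G, 0 ≤ a → a - x ∈ A → 0 ≤ b → (-b) - x ∈ A → x ∈ A) ∧
    (∀ x : G, QLe A 0 (x ⊔ 0) ∧ QLe A x (x ⊔ 0) ∧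
      ∀ y : G, QLe A 0 y → QLe A x y → QLe A (x ⊔ 0) y) := by
  refine ⟨fun x a b ha hax hb hbx => ?pointed, fun x => ⟨?zero_le, ?self_le, fun y h0 hx => ?least⟩⟩
  case pointed =>
    exact mem_of_nonneg_of_nonpos_of_sub_mem hA.ordConnected ha (neg_nonpos.2 hb) hax hbx
  case zero_le => exact QLe.of_le le_sup_right
  case self_le => exact QLe.of_le le_sup_left
  case least => exact QLe.sup hA.directedOn hx h0
end
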